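/- Anti-symmetry of inverses at high order: if α is a loop at x of order at least r (all iterated integrals of length ≤ r-1 vanish on α), then for every word u of 1-forms of length at most 2r-1, ∫_{α^{-1}} u = -∫_α u. -/

import Mathlib

open Finset

attribute [local instance] Classical.propDecidable

/-- A digraph: vertex type `V`, arrow relation without self-loops. -/
structure Digraph' (V : Type*) where
  Arrow : V → V → Prop
  irrefl : ∀ v, ¬ Arrow v v

/-- A step of a path map: an arrow `a → b` traversed forward, an arrow `a → b`
traversed backward (from `b` to `a`), or a trivial arrow at a vertex. -/
inductive PStep (V : Type*) where
  | fwd : V → V → PStep V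
  | bwd : V → V → PStep V
  | triv : V → PStep V

namespace PStep
variable {V : Type*}

def src : PStep V → V
  | fwd a _ => a
  | bwd _ b => b
  | triv a => a

def tgt : PStep V → V
  | fwd _ b => b
  | bwd a _ => a
  | triv a => a

/-- The step uses an actual arrow of `G` (or is trivial). -/
def ok (G : Digraph' V) : PStep V → Prop
  | fwd a b => G.Arrow a b
  | bwd a b => G.Arrow a b
  | triv _ => True

/-- The inverse step. -/
def inv : PStep V → PStep V
  | fwd a b => bwd a b
  | bwd a b => fwd a b
  | triv a => triv a

/-- Pairing `⟨ω, s⟩` of a 1-form with a step: `ω(a)` forward, `-ω(a)` backward,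
`0` on trivial arrows. -/
def pair {K : Type*} [Field K] (ω : V → V → K) : PStep V → K
  | fwd a b => ω a b
  | bwd a b => - ω a b
  | triv _ => 0

end PStep

/-- `σ 1, …, σ n` are the steps of a path map `I_n → G`. -/
def IsPathMap {V : Type*} (G : Digraph' V) (n : ℕ) (σ : ℕ → PStep V) : Prop :=
  (∀ t, 1 ≤ t → t ≤ n → (σ t).ok G) ∧
  (∀ t, 1 ≤ t → t < n → (σ t).tgt = (σ (t + 1)).src)

/-- Volume number of a finite sequence: product of factorials of multiplicities. -/
def volFin {r : ℕ} (g : Fin r → ℕ) : ℕ :=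
  ∏ k ∈ Finset.image g Finset.univ,
    Nat.factorial ((Finset.univ.filter (fun j => g j = k)).card)

/-- The iterated integral `∫_α ω_1 ⋯ ω_r` along a path map of length `n`
with steps `σ 1, …, σ n`. -/
noncomputable def iint (K : Type*) [Field K] {V : Type*} (n : ℕ) (σ : ℕ → PStep V)
    (r : ℕ) (ω : Fin r → V → V → K) : K :=
  ∑ f ∈ Finset.univ.filter (fun f : Fin r → Fin n => Monotone f),
    (∏ i, PStep.pair (ω i) (σ ((f i : ℕ) + 1))) / (volFin (fun i => (f i : ℕ)) : K)

/-- Concatenation of step sequences: the first `n` steps from `σ`, then steps of `τ`. -/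
def concatP {V : Type*} (n : ℕ) (σ τ : ℕ → PStep V) : ℕ → PStep V :=
  fun t => if t ≤ n then σ t else τ (t - n)

/-- The inverse path map of a path map of length `n`. -/
def invP {V : Type*} (n : ℕ) (σ : ℕ → PStep V) : ℕ → PStep V :=
  fun t => (σ (n + 1 - t)).inv

/-- Multiplicity of the value `k` in the (1-indexed) sequence `t 1, …, t r`. -/
def multN (t : ℕ → ℕ) (r k : ℕ) : ℕ := ((Finset.Icc 1 r).filter (fun j => t j = k)).card

/-- Volume number of the sequence `t 1, …, t r`: the product over all `k` of
the factorial of the multiplicity of `k`. -/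
noncomputable def volN (t : ℕ → ℕ) (r : ℕ) : ℕ := ∏ᶠ k, Nat.factorial (multN t r k)

/-- A path map is at least of order `r` if all iterated integrals of length `≤ r-1`
vanish on it. -/
def atLeastOrder (K : Type*) [Field K] {V : Type*} (n : ℕ) (σ : ℕ → PStep V) (r : ℕ) : Prop :=
  ∀ l : ℕ, 1 ≤ l → l ≤ r - 1 → ∀ ω : Fin l → V → V → K, iint K n σ l ω = 0

/-!
List the letters of a word as `ω 0, ω 1, …` and let the entry `(a, b)` of an upper triangular
matrix be the iterated integral of the subword `ω a ⋯ ω (b - 1)`. Splitting a monotone map at the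
indices it sends to the last step shows that concatenation of paths becomes multiplication of
matrices, a single step being the exponential of a superdiagonal matrix. Inverting a step negates
the exponent, so the matrices `A` of `α` and `B` of `α⁻¹` satisfy `A * B = 1`. Hence
`(A - 1) + (B - 1) = (A - 1) ^ 2 * B`, and if `A - 1` vanishes in the first `r` diagonals, then
the right-hand side vanishes in the first `2 * r` diagonals.
-/

section VanishesBelow

variable {R : Type*}

/-- The upper triangular matrix `f` is zero on its diagonals `0, …, r - 1`, the `d`-th diagonal
consisting of the entries `(a, a + d)`. This is the filtration by word length: a path of order at
least `r` has matrices of iterated integrals which agree with the identity to this order. -/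
def VanishesBelow [Zero R] (r : ℕ) (f : IncidenceAlgebra R ℕ) : Prop :=
  ∀ a b, b < a + r → f a b = 0

lemma vanishesBelow_zero [Zero R] (f : IncidenceAlgebra R ℕ) : VanishesBelow 0 f :=
  fun _ _ hba => f.apply_eq_zero_of_not_le hba.not_ge

namespace VanishesBelow

lemma mul [NonUnitalNonAssocSemiring R] {r s : ℕ} {f g : IncidenceAlgebra R ℕ}
    (hf : VanishesBelow r f) (hg : VanishesBelow s g) : VanishesBelow (r + s) (f * g) := by
  intro a b hab
  rw [IncidenceAlgebra.mul_apply]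
  refine sum_eq_zero fun c _ => ?_
  rcases lt_or_ge c (a + r) with hc | hc
  · rw [hf a c hc, zero_mul]
  · rw [hg c b (by omega), mul_zero]

lemma sub_one_add_sub_one_of_mul_eq_one [Ring R] {r : ℕ} {f g : IncidenceAlgebra R ℕ}
    (hfg : f * g = 1) (hf : VanishesBelow r (f - 1)) :
    VanishesBelow (r + r) ((f - 1) + (g - 1)) := by
  have factorization : (f - 1) + (g - 1) = (f - 1) * (f - 1) * g := by
    rw [mul_assoc, sub_mul f 1 g, hfg, one_mul, mul_sub, mul_one, sub_mul, hfg, one_mul]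
    abel
  rw [factorization]
  exact (hf.mul hf).mul (vanishesBelow_zero g)

end VanishesBelow

end VanishesBelow

lemma incidenceAlgebra_mul_apply_add {R : Type*} [NonUnitalNonAssocSemiring R]
    (f g : IncidenceAlgebra R ℕ) (a d : ℕ) :
    (f * g) a (a + d) =
      ∑ p ∈ antidiagonal d, f a (a + p.1) * g (a + p.1) (a + p.1 + p.2) := by
  have icc_eq : Icc a (a + d) = Ico a (a + (d + 1)) := by
    ext c
    simp only [mem_Icc, mem_Ico]
    omega
  rw [IncidenceAlgebra.mul_apply, icc_eq, sum_Ico_eq_sum_range, Nat.add_sub_cancel_left,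
    Nat.sum_antidiagonal_eq_sum_range_succ fun k e => f a (a + k) * g (a + k) (a + k + e)]
  refine sum_congr rfl fun k hk => ?_
  rw [add_assoc, Nat.add_sub_cancel' (mem_range_succ_iff.1 hk)]

section ExpSuperdiag

variable {K : Type*} [Field K]

/-- The exponential of the matrix with entries `x a` at `(a, a + 1)` and zero elsewhere: the matrix
of iterated integrals along a single step. -/
noncomputable def expSuperdiag (x : ℕ → K) : IncidenceAlgebra K ℕ where
  toFun a b := if a ≤ b then (∏ i ∈ Ico a b, x i) / ((b - a).factorial : K) else 0
  eq_zero_of_not_le' _ _ hab := if_neg hab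

lemma expSuperdiag_apply_add (x : ℕ → K) (a d : ℕ) :
    expSuperdiag x a (a + d) = (∏ j ∈ range d, x (a + j)) / (d.factorial : K) := by
  have h : expSuperdiag x a (a + d) =
      (∏ i ∈ Ico a (a + d), x i) / ((a + d - a).factorial : K) := if_pos (Nat.le_add_right a d)
  rw [h, prod_Ico_eq_prod_range, Nat.add_sub_cancel_left]

lemma sum_antidiagonal_neg_one_pow_div_factorial [CharZero K] (d : ℕ) :
    ∑ p ∈ antidiagonal d, (-1 : K) ^ p.2 / (p.1.factorial * p.2.factorial) =
      if d = 0 then 1 else 0 := by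
  have h := congrArg (PowerSeries.coeff d) (PowerSeries.exp_mul_exp_neg_eq_one (A := K))
  rw [PowerSeries.coeff_mul, PowerSeries.coeff_one] at h
  rw [← h]
  refine sum_congr rfl fun p _ => ?_
  simp only [PowerSeries.coeff_exp, one_div, map_inv₀, map_natCast, PowerSeries.evalNegHom,
    PowerSeries.coeff_rescale]
  ring

lemma expSuperdiag_mul_expSuperdiag_neg [CharZero K] (x : ℕ → K) :
    expSuperdiag x * expSuperdiag (-x) = 1 := by
  ext a b hab
  obtain ⟨d, rfl⟩ := Nat.exists_eq_add_of_le hab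
  calc (expSuperdiag x * expSuperdiag (-x)) a (a + d)
      = ∑ p ∈ antidiagonal d, (∏ j ∈ range d, x (a + j)) *
          ((-1) ^ p.2 / (p.1.factorial * p.2.factorial)) := by
        rw [incidenceAlgebra_mul_apply_add]
        refine sum_congr rfl fun p hp => ?_
        rw [expSuperdiag_apply_add, expSuperdiag_apply_add, ← HasAntidiagonal.mem_antidiagonal.1 hp,
          prod_range_add]
        simp only [Pi.neg_apply, prod_neg, card_range, add_assoc]
        ring
    _ = (∏ j ∈ range d, x (a + j)) * if d = 0 then 1 else 0 := by
        rw [← mul_sum, sum_antidiagonal_neg_one_pow_div_factorial]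
    _ = (1 : IncidenceAlgebra K ℕ) a (a + d) := by
        rcases Nat.eq_zero_or_pos d with rfl | hd
        · simp
        · simp [hd.ne']

end ExpSuperdiag

section MonotoneMaps

variable {k d m n : ℕ}

/-- Extend `g : Fin k → Fin n` by `d` further entries, all equal to the new top element of
`Fin (n + 1)`. -/
def appendLast (d : ℕ) (g : Fin k → Fin n) : Fin (k + d) → Fin (n + 1) :=
  Fin.append (fun i => (g i).castSucc) (fun _ => Fin.last n)

@[simp]
lemma appendLast_castAdd (g : Fin k → Fin n) (i : Fin k) :
    appendLast d g (Fin.castAdd d i) = (g i).castSucc :=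
  Fin.append_left _ _ i

@[simp]
lemma appendLast_natAdd (g : Fin k → Fin n) (i : Fin d) :
    appendLast d g (Fin.natAdd k i) = Fin.last n :=
  Fin.append_right _ _ i

lemma appendLast_injective : Function.Injective (appendLast d : (Fin k → Fin n) → _) := by
  intro g g' h
  funext i
  simpa using congrFun h (Fin.castAdd d i)

lemma monotone_appendLast {g : Fin k → Fin n} (hg : Monotone g) : Monotone (appendLast d g) := by
  intro i j hij
  induction j using Fin.addCases with
  | right j => simpa only [appendLast_natAdd] using Fin.le_last _
  | left j =>
    induction i using Fin.addCases with
    | left i => simpa only [appendLast_castAdd] using Fin.castSucc_le_castSucc_iff.2 (hg hij)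
    | right i =>
      have : k + (i : ℕ) ≤ j := hij
      omega

/-- The number of entries of `f` other than the top element of `Fin (n + 1)`; for monotone `f`,
the length of the initial segment of such entries. -/
def countBelowLast (f : Fin m → Fin (n + 1)) : ℕ :=
  #{i | f i < Fin.last n}

lemma countBelowLast_le (f : Fin m → Fin (n + 1)) : countBelowLast f ≤ m :=
  (card_le_univ _).trans_eq (Fintype.card_fin m)

lemma countBelowLast_appendLast (g : Fin k → Fin n) : countBelowLast (appendLast d g) = k := by
  rw [countBelowLast, card_filter, Fin.sum_univ_add]
  simp [Fin.castSucc_lt_last]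

lemma exists_appendLast_eq {f : Fin (k + d) → Fin (n + 1)} (hf : Monotone f)
    (hk : countBelowLast f = k) : ∃ g : Fin k → Fin n, Monotone g ∧ appendLast d g = f := by
  have lt_last_iff (i : Fin (k + d)) : f i < Fin.last n ↔ (i : ℕ) < k :=
    (Tuple.lt_card_lt_iff_apply_lt_of_monotone hf).symm.trans
      (iff_of_eq (congrArg ((i : ℕ) < ·) hk))
  have init_ne (i : Fin k) : f (Fin.castAdd d i) ≠ Fin.last n :=
    ((lt_last_iff _).2 i.isLt).ne
  have tail_eq (i : Fin d) : f (Fin.natAdd k i) = Fin.last n := by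
    simpa [lt_last_iff] using (Fin.le_last (f (Fin.natAdd k i))).lt_or_eq
  refine ⟨fun i => (f (Fin.castAdd d i)).castPred (init_ne i), fun i j hij => ?_, ?_⟩
  · exact Fin.castPred_le_castPred_iff.2 (hf hij)
  · funext i
    induction i using Fin.addCases with
    | left i => simp
    | right i => simp [tail_eq]

lemma sum_monotone_countBelowLast_eq {M : Type*} [AddCommMonoid M]
    (F : (Fin (k + d) → Fin (n + 1)) → M) :
    ∑ f with Monotone f ∧ countBelowLast f = k, F f =
      ∑ g : Fin k → Fin n with Monotone g, F (appendLast d g) := by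
  have image_eq : ({f | Monotone f ∧ countBelowLast f = k} : Finset (Fin (k + d) → Fin (n + 1))) =
      image (appendLast d) {g : Fin k → Fin n | Monotone g} := by
    ext f
    simp only [mem_filter, mem_univ, true_and, mem_image]
    constructor
    · exact fun ⟨hf, hk⟩ => exists_appendLast_eq hf hk
    · rintro ⟨g, hg, rfl⟩
      exact ⟨monotone_appendLast hg, countBelowLast_appendLast g⟩
  rw [image_eq, sum_image appendLast_injective.injOn]

lemma volFin_val (f : Fin m → Fin n) :
    volFin (fun i => (f i : ℕ)) = ∏ c, (#{i | f i = c}).factorial := by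
  have image_val : image (fun i => (f i : ℕ)) univ = image Fin.val (image f univ) :=
    image_image.symm
  rw [volFin, image_val, prod_image Fin.val_injective.injOn]
  simp only [Fin.val_inj]
  refine prod_subset (subset_univ _) fun c _ hc => ?_
  have fiber_empty : ({i | f i = c} : Finset (Fin m)) = ∅ :=
    filter_false_of_mem fun i _ hi => hc (mem_image.2 ⟨i, mem_univ i, hi⟩)
  rw [fiber_empty, card_empty, Nat.factorial_zero]

lemma volFin_appendLast (g : Fin k → Fin n) :
    volFin (fun i => (appendLast d g i : ℕ)) = volFin (fun i => (g i : ℕ)) * d.factorial := by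
  rw [volFin_val, volFin_val, Fin.prod_univ_castSucc]
  simp only [card_filter, Fin.sum_univ_add]
  simp [(Fin.castSucc_ne_last _).symm]

end MonotoneMaps

lemma PStep.pair_inv {V K : Type*} [Field K] (ω : V → V → K) (s : PStep V) :
    PStep.pair ω s.inv = -PStep.pair ω s := by
  cases s <;> simp [PStep.pair, PStep.inv]

section IteratedIntegrals

variable {V K : Type*} [Field K]

lemma iint_length_zero (n : ℕ) (σ : ℕ → PStep V) (ω : Fin 0 → V → V → K) :
    iint K n σ 0 ω = 1 := by
  simp [iint, volFin, filter_true_of_mem, Subsingleton.monotone]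

lemma iint_zero_steps_of_pos {m : ℕ} (hm : 0 < m) (σ : ℕ → PStep V) (ω : Fin m → V → V → K) :
    iint K 0 σ m ω = 0 := by
  have : Nonempty (Fin m) := ⟨⟨0, hm⟩⟩
  simp [iint]

/-- The matrix of iterated integrals along a single step `s`. -/
noncomputable def stepMatrix (ω : ℕ → V → V → K) (s : PStep V) : IncidenceAlgebra K ℕ :=
  expSuperdiag fun a => PStep.pair (ω a) s

lemma stepMatrix_mul_stepMatrix_inv [CharZero K] (ω : ℕ → V → V → K) (s : PStep V) :
    stepMatrix ω s * stepMatrix ω s.inv = 1 := by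
  have h : (fun a => PStep.pair (ω a) s.inv) = -fun a => PStep.pair (ω a) s :=
    funext fun a => PStep.pair_inv (ω a) s
  rw [stepMatrix, stepMatrix, h, expSuperdiag_mul_expSuperdiag_neg]

/-- The matrix of iterated integrals along the steps `σ 1, …, σ n`, defined multiplicatively. Its
entry `(a, b)` is the integral of `ω a ⋯ ω (b - 1)`, see `iint_eq_pathMatrix_apply`. -/
noncomputable def pathMatrix (ω : ℕ → V → V → K) (n : ℕ) (σ : ℕ → PStep V) :
    IncidenceAlgebra K ℕ :=
  ((List.range n).map fun t => stepMatrix ω (σ (t + 1))).prod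

lemma pathMatrix_succ (ω : ℕ → V → V → K) (n : ℕ) (σ : ℕ → PStep V) :
    pathMatrix ω (n + 1) σ = pathMatrix ω n σ * stepMatrix ω (σ (n + 1)) := by
  simp [pathMatrix, List.range_succ]

lemma pathMatrix_succ' (ω : ℕ → V → V → K) (n : ℕ) (σ : ℕ → PStep V) :
    pathMatrix ω (n + 1) σ = stepMatrix ω (σ 1) * pathMatrix ω n (fun t => σ (t + 1)) := by
  simp [pathMatrix, List.range_succ_eq_map, Function.comp_def]

lemma pathMatrix_mul_pathMatrix_invP [CharZero K] (ω : ℕ → V → V → K) (n : ℕ)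
    (σ : ℕ → PStep V) : pathMatrix ω n σ * pathMatrix ω n (invP n σ) = 1 := by
  induction n with
  | zero => simp [pathMatrix]
  | succ n ih =>
    have invP_tail : (fun t => invP (n + 1) σ (t + 1)) = invP n σ := by
      funext t
      simp [invP]
    have invP_head : invP (n + 1) σ 1 = (σ (n + 1)).inv := by simp [invP]
    rw [pathMatrix_succ, pathMatrix_succ', invP_tail, invP_head, mul_assoc,
      ← mul_assoc (stepMatrix ω _), stepMatrix_mul_stepMatrix_inv, one_mul, ih]

lemma iint_summand_appendLast (ω : ℕ → V → V → K) (σ : ℕ → PStep V) (a d : ℕ) {k n : ℕ}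
    (g : Fin k → Fin n) :
    (∏ i : Fin (k + d), PStep.pair (ω (a + i)) (σ ((appendLast d g i : ℕ) + 1))) /
        (volFin (fun i => (appendLast d g i : ℕ)) : K) =
      (∏ i : Fin k, PStep.pair (ω (a + i)) (σ ((g i : ℕ) + 1))) /
          (volFin (fun i => (g i : ℕ)) : K) *
        stepMatrix ω (σ (n + 1)) (a + k) (a + k + d) := by
  rw [volFin_appendLast, Fin.prod_univ_add, stepMatrix, expSuperdiag_apply_add, prod_range,
    Nat.cast_mul, div_mul_div_comm]
  simp only [appendLast_castAdd, appendLast_natAdd, Fin.val_castSucc, Fin.val_last,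
    Fin.val_castAdd, Fin.val_natAdd, add_assoc]

lemma iint_succ (ω : ℕ → V → V → K) (n : ℕ) (σ : ℕ → PStep V) (a m : ℕ) :
    iint K (n + 1) σ m (fun i => ω (a + i)) =
      ∑ p ∈ antidiagonal m, iint K n σ p.1 (fun i => ω (a + i)) *
        stepMatrix ω (σ (n + 1)) (a + p.1) (a + p.1 + p.2) := by
  rw [iint, ← sum_fiberwise_of_maps_to (g := countBelowLast) (t := range (m + 1))
    (fun f _ => mem_range.2 (Nat.lt_succ_of_le (countBelowLast_le f))),
    Nat.sum_antidiagonal_eq_sum_range_succ fun k d => iint K n σ k (fun i => ω (a + i)) *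
      stepMatrix ω (σ (n + 1)) (a + k) (a + k + d)]
  refine sum_congr rfl fun k hk => ?_
  obtain ⟨d, rfl⟩ := Nat.exists_eq_add_of_le (mem_range_succ_iff.1 hk)
  rw [filter_filter, sum_monotone_countBelowLast_eq, Nat.add_sub_cancel_left, iint, sum_mul]
  exact sum_congr rfl fun g _ => iint_summand_appendLast ω σ a d g

theorem iint_eq_pathMatrix_apply (ω : ℕ → V → V → K) (n : ℕ) (σ : ℕ → PStep V) (a m : ℕ) :
    iint K n σ m (fun i => ω (a + i)) = pathMatrix ω n σ a (a + m) := by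
  induction n generalizing m with
  | zero =>
    rcases Nat.eq_zero_or_pos m with rfl | hm
    · simp [iint_length_zero, pathMatrix]
    · simp [iint_zero_steps_of_pos hm, pathMatrix, hm.ne']
  | succ n ih =>
    rw [pathMatrix_succ, incidenceAlgebra_mul_apply_add, iint_succ]
    simp only [ih]

lemma atLeastOrder.vanishesBelow_pathMatrix_sub_one {n r : ℕ} {σ : ℕ → PStep V}
    (hα : atLeastOrder K n σ r) (ω : ℕ → V → V → K) :
    VanishesBelow r (pathMatrix ω n σ - 1) := by
  intro a b hab
  rcases lt_or_ge b a with hba | hab'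
  · exact IncidenceAlgebra.apply_eq_zero_of_not_le hba.not_ge _
  obtain ⟨l, rfl⟩ := Nat.exists_eq_add_of_le hab'
  rw [IncidenceAlgebra.sub_apply, ← iint_eq_pathMatrix_apply]
  rcases Nat.eq_zero_or_pos l with rfl | hl
  · simp [iint_length_zero]
  · simp [hα l hl (by omega), hl.ne']

end IteratedIntegrals

theorem stmt17_general {V : Type*} (K : Type*) [Field K] [CharZero K] (n r : ℕ)
    (σ : ℕ → PStep V) (hα : atLeastOrder K n σ r) :
    ∀ l : ℕ, 1 ≤ l → l ≤ 2 * r - 1 → ∀ ω : Fin l → V → V → K,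
      iint K n (invP n σ) l ω = -iint K n σ l ω := by
  intro l hl hlr ω
  obtain ⟨w, rfl⟩ : ∃ w : ℕ → V → V → K, ω = fun i : Fin l => w (0 + i) :=
    ⟨Function.extend Fin.val ω 0, funext fun i => by simp [Fin.val_injective.extend_apply]⟩
  have sum_vanishes := (hα.vanishesBelow_pathMatrix_sub_one w).sub_one_add_sub_one_of_mul_eq_one
    (pathMatrix_mul_pathMatrix_invP w n σ) 0 (0 + l) (by omega)
  have off_diagonal : (1 : IncidenceAlgebra K ℕ) 0 (0 + l) = 0 := if_neg (by omega)
  rw [IncidenceAlgebra.add_apply, IncidenceAlgebra.sub_apply, IncidenceAlgebra.sub_apply,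
    off_diagonal, sub_zero, sub_zero] at sum_vanishes
  rw [iint_eq_pathMatrix_apply, iint_eq_pathMatrix_apply]
  exact eq_neg_of_add_eq_zero_right sum_vanishes

/-- Anti-symmetry of inverses at high order: if `α` is a loop at `x` of order `≥ r`,
then `∫_{α⁻¹} u = -∫_α u` for every word `u` of length `≤ 2r-1`. -/
theorem stmt17 {V : Type*} (K : Type*) [Field K] [CharZero K] (G : Digraph' V)
    (n r : ℕ) (σ : ℕ → PStep V) (hσ : IsPathMap G n σ)
    (hloop : (σ 1).src = (σ n).tgt) (hα : atLeastOrder K n σ r) :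
    ∀ l : ℕ, 1 ≤ l → l ≤ 2 * r - 1 → ∀ ω : Fin l → V → V → K,
      iint K n (invP n σ) l ω = - iint K n σ l ω :=
  stmt17_general K n r σ hα
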